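/- arXiv:1205.1833 — 3 statements merged into one kernel-verified Lean document; each statement's English description precedes it below -/
import Mathlib

section
/- Let n ≥ 5 be an integer and let c be a parameter in 𝒦_n. Then for every ε > 0 there exists a Borel probability measure μ on ℝ that is invariant under f_c (i.e., the pushforward of μ by f_c equals μ), whose support is contained in the interval I_c = [c, c² + c], such that the function x ↦ log |2x| is μ-integrable and ∫ log |2x| dμ(x) ≤ χ_crit(c)/2 + ε. In particular the infimum of ∫ log |Df_c| dμ over f_c-invariant Borel probability measures supported on I_c is at most χ_crit(c)/2. -/
open MeasureTheory

/-- The quadratic map `f_c(x) = x² + c`. -/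
def fc (c : ℝ) : ℝ → ℝ := fun x => x ^ 2 + c

/-- The set `𝒦_n` of real parameters. -/
def Kset (n : ℕ) : Set ℝ :=
  {c : ℝ | c < 0 ∧ (∀ j : ℕ, 1 ≤ j → j ≤ n - 1 → 0 < (fc c)^[j] c) ∧
    ∀ k : ℕ, (fc c)^[n + 3 * k + 1] c < 0 ∧ 0 < (fc c)^[n + 3 * k + 2] c}

/-- The lower Lyapunov exponent of the critical value:
`χ_crit(c) = liminf_{m → ∞} (1/m) log |Df_c^m(c)|`. -/
noncomputable def chiCrit (c : ℝ) : ℝ :=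
  Filter.liminf
    (fun m : ℕ => (1 / (m : ℝ)) * Real.log (∏ j ∈ Finset.range m, |2 * (fc c)^[j] c|))
    Filter.atTop

/-- Parameter bounds. -/
lemma c_bounds {n : ℕ} (hn : 5 ≤ n) {c : ℝ} (hc : c ∈ Kset n) : -2 < c ∧ c < -1.98 := by
  obtain ⟨h0, h1, h2⟩ := hc
  constructor
  · by_contra hcon
    push Not at hcon
    have key : ∀ j : ℕ, -c ≤ (fc c)^[j + 1] c := by
      intro j
      induction j with
      | zero => simp only [zero_add, Function.iterate_one, fc]; nlinarith
      | succ j ih =>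
        rw [Function.iterate_succ_apply']
        simp only [fc] at ih ⊢
        nlinarith
    have := key n
    have h3 := (h2 0).1
    simp only [mul_zero, add_zero] at h3
    linarith
  · by_contra hcon
    push Not at hcon
    have e1 := h1 1 (by omega) (by omega)
    have e2 := h1 2 (by omega) (by omega)
    have e3 := h1 3 (by omega) (by omega)
    have e4 := h1 4 (by omega) (by omega)
    simp only [Function.iterate_succ_apply', Function.iterate_zero, id] at e1 e2 e3 e4
    set x1 := fc c c with hx1
    set x2 := fc c x1 with hx2
    set x3 := fc c x2 with hx3
    simp only [fc] at hx1 hx2 hx3 e4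
    have a1 : x1 ≤ 0.98 * (-c) := by nlinarith
    have a2 : x2 ≤ 0.902 * (-c) := by nlinarith
    have a3 : x3 ≤ 0.62 * (-c) := by nlinarith
    nlinarith

noncomputable def g1 (c w : ℝ) : ℝ := √(w - c)
noncomputable def g2 (c w : ℝ) : ℝ := √(g1 c w - c)
noncomputable def hh (c w : ℝ) : ℝ := √(-g2 c w - c)

lemma g_bounds {c w : ℝ} (c1 : -2 < c) (c2 : c < -1.98) (w1 : -(4/5) ≤ w) (w2 : w ≤ 4/5) :
    (1.08 ≤ g1 c w ∧ g1 c w ≤ 1.68) ∧ (1.74 ≤ g2 c w ∧ g2 c w ≤ 1.92) ∧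
    (0.2 ≤ hh c w ∧ hh c w ≤ 0.52) := by
  have A : 1.08 ≤ g1 c w ∧ g1 c w ≤ 1.68 := by
    constructor
    · apply Real.le_sqrt_of_sq_le; linarith
    · apply Real.sqrt_le_iff.2; constructor <;> linarith
  have B : 1.74 ≤ g2 c w ∧ g2 c w ≤ 1.92 := by
    constructor
    · apply Real.le_sqrt_of_sq_le; linarith
    · apply Real.sqrt_le_iff.2; constructor <;> linarith
  refine ⟨A, B, ?_, ?_⟩
  · apply Real.le_sqrt_of_sq_le; linarith
  · apply Real.sqrt_le_iff.2; constructor <;> linarith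

lemma sq_rel {c w : ℝ} (c1 : -2 < c) (c2 : c < -1.98) (w1 : -(4/5) ≤ w) (w2 : w ≤ 4/5) :
    g1 c w ^ 2 = w - c ∧ g2 c w ^ 2 = g1 c w - c ∧ hh c w ^ 2 = - g2 c w - c := by
  obtain ⟨A, B, C⟩ := g_bounds c1 c2 w1 w2
  refine ⟨Real.sq_sqrt (by linarith), Real.sq_sqrt (by linarith), Real.sq_sqrt (by linarith)⟩

/-- Values of the gluing function `y ↦ h(-√(y-c))`. -/
lemma glue_bounds {c y : ℝ} (c1 : -2 < c) (c2 : c < -1.98) (y1 : 0 ≤ y) (y2 : y ≤ 3/5) :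
    (0.55 ≤ hh c (-√(y - c)) ∧ hh c (-√(y - c)) ≤ 0.65) ∧
    fc c (hh c (-√(y - c))) = - g2 c (-√(y - c)) ∧
    fc c (- g2 c (-√(y - c))) = g1 c (-√(y - c)) ∧
    fc c (g1 c (-√(y - c))) = -√(y - c) ∧ fc c (-√(y - c)) = y := by
  have O1 : 1.4 ≤ √(y - c) := by apply Real.le_sqrt_of_sq_le; linarith
  have O2 : √(y - c) ≤ 1.62 := by apply Real.sqrt_le_iff.2; constructor <;> linarith
  have Osq : √(y - c) ^ 2 = y - c := Real.sq_sqrt (by linarith)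
  set w := -√(y - c) with hw
  have A : 0.6 ≤ g1 c w ∧ g1 c w ≤ 0.78 := by
    constructor
    · apply Real.le_sqrt_of_sq_le; linarith
    · apply Real.sqrt_le_iff.2; constructor <;> linarith
  have B : 1.6 ≤ g2 c w ∧ g2 c w ≤ 1.67 := by
    constructor
    · apply Real.le_sqrt_of_sq_le; linarith
    · apply Real.sqrt_le_iff.2; constructor <;> linarith
  have C1 : g1 c w ^ 2 = w - c := Real.sq_sqrt (by linarith)
  have C2 : g2 c w ^ 2 = g1 c w - c := Real.sq_sqrt (by linarith)
  have C3 : hh c w ^ 2 = - g2 c w - c := Real.sq_sqrt (by linarith)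
  refine ⟨⟨?_, ?_⟩, ?_, ?_, ?_, ?_⟩
  · apply Real.le_sqrt_of_sq_le; linarith
  · apply Real.sqrt_le_iff.2; constructor <;> linarith
  · simp only [fc]; linarith
  · simp only [fc]; linarith
  · simp only [fc]; linarith
  · simp only [fc]; rw [hw]; linarith

lemma sub_eq_of_sq {p q P Q : ℝ} (h : p ^ 2 - q ^ 2 = P - Q) : |P - Q| = |p - q| * |p + q| := by
  rw [← h, ← abs_mul]; ring_nf

lemma g_diff {c w w' : ℝ} (c1 : -2 < c) (c2 : c < -1.98) (w1 : -(4/5) ≤ w) (w2 : w ≤ 4/5)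
    (w1' : -(4/5) ≤ w') (w2' : w' ≤ 4/5) :
    |w - w'| = |g1 c w - g1 c w'| * (g1 c w + g1 c w') ∧
    |g1 c w - g1 c w'| = |g2 c w - g2 c w'| * (g2 c w + g2 c w') ∧
    |g2 c w - g2 c w'| = |hh c w - hh c w'| * (hh c w + hh c w') := by
  obtain ⟨A, B, C⟩ := g_bounds c1 c2 w1 w2
  obtain ⟨A', B', C'⟩ := g_bounds c1 c2 w1' w2'
  obtain ⟨D, E, F⟩ := sq_rel c1 c2 w1 w2
  obtain ⟨D', E', F'⟩ := sq_rel c1 c2 w1' w2'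
  refine ⟨?_, ?_, ?_⟩
  · rw [sub_eq_of_sq (p := g1 c w) (q := g1 c w') (by linarith),
      abs_of_pos (a := g1 c w + g1 c w') (by linarith)]
  · rw [sub_eq_of_sq (p := g2 c w) (q := g2 c w') (by linarith),
      abs_of_pos (a := g2 c w + g2 c w') (by linarith)]
  · rw [abs_sub_comm, show g2 c w' - g2 c w = -g2 c w - -g2 c w' by ring,
      sub_eq_of_sq (p := hh c w) (q := hh c w') (by linarith),
      abs_of_pos (a := hh c w + hh c w') (by linarith)]

lemma g_contr {c w w' : ℝ} (c1 : -2 < c) (c2 : c < -1.98) (w1 : -(4/5) ≤ w) (w2 : w ≤ 4/5)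
    (w1' : -(4/5) ≤ w') (w2' : w' ≤ 4/5) :
    |g1 c w - g1 c w'| ≤ |w - w'| / 2 ∧ |g2 c w - g2 c w'| ≤ |w - w'| / 4 ∧
    |hh c w - hh c w'| ≤ |w - w'| / 2 := by
  obtain ⟨A, B, C⟩ := g_bounds c1 c2 w1 w2
  obtain ⟨A', B', C'⟩ := g_bounds c1 c2 w1' w2'
  obtain ⟨D, E, F⟩ := g_diff c1 c2 w1 w2 w1' w2'
  have p1 := abs_nonneg (g1 c w - g1 c w')
  have p2 := abs_nonneg (g2 c w - g2 c w')
  have p3 := abs_nonneg (hh c w - hh c w')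
  have q1 : 2 * |g1 c w - g1 c w'| ≤ |w - w'| := by rw [D]; nlinarith
  have q2 : 3.4 * |g2 c w - g2 c w'| ≤ |g1 c w - g1 c w'| := by rw [E]; nlinarith
  have q3 : 0.4 * |hh c w - hh c w'| ≤ |g2 c w - g2 c w'| := by rw [F]; nlinarith
  refine ⟨by linarith, by linarith, by linarith⟩

/-- Derivative of the cubic block. -/
noncomputable def DD (c w : ℝ) : ℝ := (2 * hh c w) * (2 * g2 c w) * (2 * g1 c w)

lemma ratio_aux {p q d k : ℝ} (hq : 0 < q) (h : |p - q| ≤ d) (hk : d ≤ k * q) :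
    p ≤ q * Real.exp k := by
  have := Real.add_one_le_exp k
  have := le_abs_self (p - q)
  nlinarith

lemma DD_one {c w : ℝ} (c1 : -2 < c) (c2 : c < -1.98) (w1 : -(4/5) ≤ w) (w2 : w ≤ 4/5) :
    1 ≤ DD c w := by
  obtain ⟨A, B, C⟩ := g_bounds c1 c2 w1 w2
  unfold DD
  have : (0.4:ℝ) * 3.48 ≤ (2 * hh c w) * (2 * g2 c w) := by
    apply mul_le_mul <;> linarith
  nlinarith

lemma DD_dist {c w w' : ℝ} (c1 : -2 < c) (c2 : c < -1.98) (w1 : -(4/5) ≤ w) (w2 : w ≤ 4/5)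
    (w1' : -(4/5) ≤ w') (w2' : w' ≤ 4/5) :
    DD c w ≤ DD c w' * Real.exp (6 * |w - w'|) := by
  obtain ⟨A, B, C⟩ := g_bounds c1 c2 w1 w2
  obtain ⟨A', B', C'⟩ := g_bounds c1 c2 w1' w2'
  obtain ⟨D, E, F⟩ := g_contr c1 c2 w1 w2 w1' w2'
  have p := abs_nonneg (w - w')
  have r1 := ratio_aux (k := |w - w'|) (by linarith) D (by nlinarith)
  have r2 := ratio_aux (k := |w - w'|) (by linarith) E (by nlinarith)
  have r3 := ratio_aux (k := 4 * |w - w'|) (by linarith) F (by nlinarith)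
  have e : Real.exp (6 * |w - w'|) =
      Real.exp (4 * |w - w'|) * Real.exp |w - w'| * Real.exp |w - w'| := by
    rw [← Real.exp_add, ← Real.exp_add]; ring_nf
  rw [e]
  unfold DD
  calc (2 * hh c w) * (2 * g2 c w) * (2 * g1 c w)
      ≤ (2 * (hh c w' * Real.exp (4 * |w - w'|))) * (2 * (g2 c w' * Real.exp |w - w'|)) *
        (2 * (g1 c w' * Real.exp |w - w'|)) := by
        have : 0 ≤ hh c w := by linarith
        have : 0 ≤ g1 c w := by linarith
        have : 0 ≤ g2 c w := by linarith
        have : 0 ≤ hh c w' := by linarith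
        have : 0 ≤ g1 c w' := by linarith
        have : 0 ≤ g2 c w' := by linarith
        gcongr
    _ = _ := by ring

lemma DD_amgm {c w w' : ℝ} (c1 : -2 < c) (c2 : c < -1.98) (w1 : -(4/5) ≤ w) (w2 : w ≤ 4/5)
    (w1' : -(4/5) ≤ w') (w2' : w' ≤ 4/5) :
    (hh c w - hh c w') ^ 2 * (DD c w * DD c w') ≤ (w - w') ^ 2 := by
  obtain ⟨A, B, C⟩ := g_bounds c1 c2 w1 w2
  obtain ⟨A', B', C'⟩ := g_bounds c1 c2 w1' w2'
  obtain ⟨D, E, F⟩ := g_diff c1 c2 w1 w2 w1' w2'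
  have am : ∀ p q : ℝ, 4 * (p * q) ≤ (p + q) ^ 2 := fun p q => by nlinarith [sq_nonneg (p - q)]
  rw [← sq_abs (w - w'), D, E, F, ← sq_abs (hh c w - hh c w')]
  have : 0 ≤ hh c w := by linarith
  have : 0 ≤ g1 c w := by linarith
  have : 0 ≤ g2 c w := by linarith
  have : 0 ≤ hh c w' := by linarith
  have : 0 ≤ g1 c w' := by linarith
  have : 0 ≤ g2 c w' := by linarith
  calc |hh c w - hh c w'| ^ 2 * (DD c w * DD c w')
      = |hh c w - hh c w'| ^ 2 * ((4 * (hh c w * hh c w')) * (4 * (g2 c w * g2 c w')) *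
        (4 * (g1 c w * g1 c w'))) := by unfold DD; ring
    _ ≤ |hh c w - hh c w'| ^ 2 * ((hh c w + hh c w') ^ 2 * (g2 c w + g2 c w') ^ 2 *
        (g1 c w + g1 c w') ^ 2) := by
        gcongr <;> apply am
    _ = _ := by ring

/-- Pull-back through `K` cubic blocks with signs `s`. -/
noncomputable def ZZ (c : ℝ) (s : ℕ → ℝ) : ℕ → ℝ → ℝ
  | 0, w => w
  | K + 1, w => ZZ c s K (s K * hh c w)

lemma ZZ_cont (c : ℝ) (s : ℕ → ℝ) (K : ℕ) : Continuous (ZZ c s K) := by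
  induction K with
  | zero => exact continuous_id
  | succ K ih =>
    change Continuous (fun w => ZZ c s K (s K * hh c w))
    apply ih.comp
    unfold hh g2 g1
    fun_prop

lemma mem_of_sign {c w σ : ℝ} (c1 : -2 < c) (c2 : c < -1.98) (w1 : -(4/5) ≤ w) (w2 : w ≤ 4/5)
    (hσ : σ = 1 ∨ σ = -1) : -(4/5) ≤ σ * hh c w ∧ σ * hh c w ≤ 4/5 := by
  obtain ⟨A, B, C⟩ := g_bounds c1 c2 w1 w2
  rcases hσ with rfl | rfl <;> constructor <;> linarith

lemma hh_anti {c w w' : ℝ} (h : w ≤ w') : hh c w' ≤ hh c w := by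
  unfold hh g2 g1
  gcongr

/-- The pull-back preserves the interval and is monotone or antitone. -/
lemma ZZ_mono {c : ℝ} {s : ℕ → ℝ}
    (hs : ∀ k, s k = 1 ∨ s k = -1) (K : ℕ) :
    Monotone (ZZ c s K) ∨ Antitone (ZZ c s K) := by
  induction K with
  | zero => left; exact monotone_id
  | succ K ih =>
    have key : Monotone (fun w => s K * hh c w) ∨ Antitone (fun w => s K * hh c w) := by
      rcases hs K with h | h
      · right; intro w w' hw; simp only [h]; linarith [hh_anti (c := c) hw]
      · left; intro w w' hw; simp only [h]; linarith [hh_anti (c := c) hw]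
    rcases ih with ih | ih <;> rcases key with key | key
    · left; exact ih.comp key
    · right; exact ih.comp_antitone key
    · right; exact ih.comp_monotone key
    · left; exact ih.comp key

lemma ZZ_mem {c : ℝ} (c1 : -2 < c) (c2 : c < -1.98) {s : ℕ → ℝ}
    (hs : ∀ k, s k = 1 ∨ s k = -1) (K : ℕ) : ∀ w : ℝ, -(4/5) ≤ w → w ≤ 4/5 →
    -(4/5) ≤ ZZ c s K w ∧ ZZ c s K w ≤ 4/5 := by
  induction K with
  | zero => intro w a b; exact ⟨a, b⟩
  | succ K ih =>
    intro w a b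
    have := mem_of_sign c1 c2 a b (hs K)
    exact ih _ this.1 this.2

lemma block_iter {c w σ : ℝ} (c1 : -2 < c) (c2 : c < -1.98) (w1 : -(4/5) ≤ w) (w2 : w ≤ 4/5)
    (hσ : σ = 1 ∨ σ = -1) : fc c (σ * hh c w) = - g2 c w ∧ fc c (- g2 c w) = g1 c w ∧
    fc c (g1 c w) = w := by
  obtain ⟨A, B, C⟩ := sq_rel c1 c2 w1 w2
  have : σ ^ 2 = 1 := by rcases hσ with rfl | rfl <;> norm_num
  simp only [fc, mul_pow, this]
  refine ⟨by linarith, by linarith, by linarith⟩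

lemma ZZ_iter {c : ℝ} (c1 : -2 < c) (c2 : c < -1.98) {s : ℕ → ℝ}
    (hs : ∀ k, s k = 1 ∨ s k = -1) (K : ℕ) : ∀ w : ℝ, -(4/5) ≤ w → w ≤ 4/5 →
    (fc c)^[3 * K] (ZZ c s K w) = w := by
  induction K with
  | zero => intro w a b; rfl
  | succ K ih =>
    intro w a b
    have h1 := mem_of_sign c1 c2 a b (hs K)
    obtain ⟨A, B, C⟩ := block_iter c1 c2 a b (hs K)
    have h2 := ih _ h1.1 h1.2
    rw [show 3 * (K + 1) = 3 * K + 1 + 1 + 1 by ring, Function.iterate_succ_apply',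
      Function.iterate_succ_apply', Function.iterate_succ_apply']
    change fc c (fc c (fc c ((fc c)^[3 * K] (ZZ c s K (s K * hh c w))))) = w
    rw [h2, A, B, C]

/-- Derivative along `K` blocks. -/
noncomputable def QQ (c : ℝ) (s : ℕ → ℝ) (K : ℕ) (w : ℝ) : ℝ :=
  ∏ j ∈ Finset.range (3 * K), |2 * (fc c)^[j] (ZZ c s K w)|

lemma QQ_succ {c : ℝ} (c1 : -2 < c) (c2 : c < -1.98) {s : ℕ → ℝ}
    (hs : ∀ k, s k = 1 ∨ s k = -1) (K : ℕ) (w : ℝ) (a : -(4/5) ≤ w) (b : w ≤ 4/5) :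
    QQ c s (K + 1) w = QQ c s K (s K * hh c w) * DD c w := by
  have h1 := mem_of_sign c1 c2 a b (hs K)
  obtain ⟨A, B, C⟩ := block_iter c1 c2 a b (hs K)
  have h2 := ZZ_iter c1 c2 hs K _ h1.1 h1.2
  obtain ⟨A', B', C'⟩ := g_bounds c1 c2 a b
  unfold QQ
  rw [show 3 * (K + 1) = 3 * K + 1 + 1 + 1 by ring, Finset.prod_range_succ,
    Finset.prod_range_succ, Finset.prod_range_succ, Function.iterate_succ_apply',
    Function.iterate_succ_apply', Function.iterate_succ_apply']
  change (∏ j ∈ Finset.range (3 * K), |2 * (fc c)^[j] (ZZ c s K (s K * hh c w))|) *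
    |2 * ((fc c)^[3 * K] (ZZ c s K (s K * hh c w)))| *
    |2 * (fc c ((fc c)^[3 * K] (ZZ c s K (s K * hh c w))))| *
    |2 * (fc c (fc c ((fc c)^[3 * K] (ZZ c s K (s K * hh c w)))))| = _
  rw [h2, A, B]
  have e1 : |2 * (s K * hh c w)| = 2 * hh c w := by
    rw [abs_mul, abs_mul, abs_of_pos (a := hh c w) (by linarith)]
    rcases hs K with h | h <;> rw [h] <;> norm_num
  have e2 : |2 * -g2 c w| = 2 * g2 c w := by
    rw [abs_of_neg (by linarith)]; ring
  have e3 : |2 * g1 c w| = 2 * g1 c w := abs_of_pos (by linarith)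
  rw [e1, e2, e3]
  unfold DD
  ring

lemma QQ_one {c : ℝ} (c1 : -2 < c) (c2 : c < -1.98) {s : ℕ → ℝ}
    (hs : ∀ k, s k = 1 ∨ s k = -1) (K : ℕ) : ∀ w : ℝ, -(4/5) ≤ w → w ≤ 4/5 →
    1 ≤ QQ c s K w := by
  induction K with
  | zero => intro w a b; simp [QQ]
  | succ K ih =>
    intro w a b
    rw [QQ_succ c1 c2 hs K w a b]
    have h1 := mem_of_sign c1 c2 a b (hs K)
    have := ih _ h1.1 h1.2
    have := DD_one c1 c2 a b
    nlinarith

lemma sign_abs {σ p q : ℝ} (hσ : σ = 1 ∨ σ = -1) : |σ * p - σ * q| = |p - q| := by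
  rw [← mul_sub, abs_mul]
  rcases hσ with rfl | rfl <;> simp

lemma QQ_dist {c : ℝ} (c1 : -2 < c) (c2 : c < -1.98) {s : ℕ → ℝ}
    (hs : ∀ k, s k = 1 ∨ s k = -1) (K : ℕ) : ∀ w w' : ℝ, -(4/5) ≤ w → w ≤ 4/5 →
    -(4/5) ≤ w' → w' ≤ 4/5 →
    QQ c s K w ≤ QQ c s K w' * Real.exp (12 * |w - w'|) ∧
    (ZZ c s K w - ZZ c s K w') ^ 2 * (QQ c s K w * QQ c s K w') ≤ (w - w') ^ 2 := by
  induction K with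
  | zero => intro w w' _ _ _ _; simp [QQ, ZZ]
  | succ K ih =>
    intro w w' a b a' b'
    rw [QQ_succ c1 c2 hs K w a b, QQ_succ c1 c2 hs K w' a' b']
    have h1 := mem_of_sign c1 c2 a b (hs K)
    have h1' := mem_of_sign c1 c2 a' b' (hs K)
    obtain ⟨i1, i2⟩ := ih _ _ h1.1 h1.2 h1'.1 h1'.2
    have d1 := DD_one c1 c2 a b
    have d1' := DD_one c1 c2 a' b'
    have q1 := QQ_one c1 c2 hs K _ h1.1 h1.2
    have q1' := QQ_one c1 c2 hs K _ h1'.1 h1'.2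
    have dd := DD_dist c1 c2 a b a' b'
    have am := DD_amgm c1 c2 a b a' b'
    have ct := (g_contr c1 c2 a b a' b').2.2
    constructor
    · calc QQ c s K (s K * hh c w) * DD c w
          ≤ (QQ c s K (s K * hh c w') * Real.exp (6 * |w - w'|)) *
            (DD c w' * Real.exp (6 * |w - w'|)) := by
            have i3 : QQ c s K (s K * hh c w) ≤
                QQ c s K (s K * hh c w') * Real.exp (6 * |w - w'|) := by
              refine i1.trans ?_
              rw [sign_abs (hs K)]
              have : Real.exp (12 * |hh c w - hh c w'|) ≤ Real.exp (6 * |w - w'|) :=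
                Real.exp_le_exp.2 (by linarith)
              gcongr
            have := Real.exp_pos (6 * |w - w'|)
            apply mul_le_mul i3 dd (by linarith) (by positivity)
        _ = _ := by
            rw [show 12 * |w - w'| = 6 * |w - w'| + 6 * |w - w'| by ring, Real.exp_add]; ring
    · change (ZZ c s K (s K * hh c w) - ZZ c s K (s K * hh c w')) ^ 2 * _ ≤ _
      rw [← sq_abs (s K * hh c w - s K * hh c w'), sign_abs (hs K), sq_abs] at i2
      have : 0 ≤ DD c w * DD c w' := by positivity
      calc _ = ((ZZ c s K (s K * hh c w) - ZZ c s K (s K * hh c w')) ^ 2 *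
            (QQ c s K (s K * hh c w) * QQ c s K (s K * hh c w'))) * (DD c w * DD c w') := by ring
        _ ≤ (hh c w - hh c w') ^ 2 * (DD c w * DD c w') := by gcongr
        _ ≤ _ := am

/-- Pull-back along positive branches. -/
noncomputable def LL (c : ℝ) : ℕ → ℝ → ℝ
  | 0, w => w
  | j + 1, w => LL c j √(w - c)

lemma LL_cont (c : ℝ) (j : ℕ) : Continuous (LL c j) := by
  induction j with
  | zero => exact continuous_id
  | succ j ih =>
    change Continuous (fun w => LL c j √(w - c))
    apply ih.comp
    fun_prop

lemma LL_mono (c : ℝ) (j : ℕ) : Monotone (LL c j) := by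
  induction j with
  | zero => exact monotone_id
  | succ j ih =>
    intro w w' h
    exact ih (by gcongr)

lemma sqrt_one {c w : ℝ} (c2 : c < -1.98) (h : -(4/5) ≤ w) : 1 ≤ √(w - c) := by
  apply Real.le_sqrt_of_sq_le; linarith

lemma LL_iter {c : ℝ} (c2 : c < -1.98) (j : ℕ) : ∀ w : ℝ, -(4/5) ≤ w →
    (fc c)^[j] (LL c j w) = w := by
  induction j with
  | zero => intro w _; rfl
  | succ j ih =>
    intro w h
    rw [Function.iterate_succ_apply']
    change fc c ((fc c)^[j] (LL c j √(w - c))) = w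
    have := sqrt_one c2 h
    rw [ih _ (by linarith)]
    simp only [fc]
    rw [Real.sq_sqrt (by linarith)]; ring

lemma LL_ge {c : ℝ} (c2 : c < -1.98) (j : ℕ) : ∀ w : ℝ, 1 ≤ w → 1 ≤ LL c j w := by
  induction j with
  | zero => intro w h; exact h
  | succ j ih =>
    intro w h
    exact ih _ (sqrt_one c2 (by linarith))

lemma sqrt_contr {c w w' : ℝ} (c2 : c < -1.98) (h : -(4/5) ≤ w) (h' : -(4/5) ≤ w') :
    |√(w - c) - √(w' - c)| ≤ |w - w'| := by
  have a := sqrt_one c2 h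
  have a' := sqrt_one c2 h'
  have := sub_eq_of_sq (p := √(w - c)) (q := √(w' - c)) (P := w) (Q := w') (by
    rw [Real.sq_sqrt (by linarith), Real.sq_sqrt (by linarith)]; ring)
  rw [this, abs_of_pos (a := √(w - c) + √(w' - c)) (by linarith)]
  nlinarith [abs_nonneg (√(w - c) - √(w' - c))]

lemma LL_contr {c : ℝ} (c2 : c < -1.98) (j : ℕ) : ∀ w w' : ℝ, -(4/5) ≤ w → -(4/5) ≤ w' →
    |LL c j w - LL c j w'| ≤ |w - w'| := by
  induction j with
  | zero => intro w w' _ _; exact le_rfl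
  | succ j ih =>
    intro w w' h h'
    have a := sqrt_one c2 h
    have a' := sqrt_one c2 h'
    exact (ih _ _ (by linarith) (by linarith)).trans (sqrt_contr c2 h h')

/-- The points `f^{n+3k}(c)`. -/
noncomputable def uu (c : ℝ) (n k : ℕ) : ℝ := (fc c)^[n + 3 * k] c
noncomputable def ss (c : ℝ) (n k : ℕ) : ℝ := if 0 ≤ uu c n k then 1 else -1

lemma ss_sign (c : ℝ) (n k : ℕ) : ss c n k = 1 ∨ ss c n k = -1 := by
  unfold ss; split_ifs <;> simp

lemma uu_mem {n : ℕ} (hn : 5 ≤ n) {c : ℝ} (hc : c ∈ Kset n) (k : ℕ) :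
    -(4/5) ≤ uu c n k ∧ uu c n k ≤ 4/5 := by
  obtain ⟨c1, c2⟩ := c_bounds hn hc
  obtain ⟨a, b⟩ := hc.2.2 k
  rw [show n + 3 * k + 2 = n + 3 * k + 1 + 1 by ring] at b
  rw [Function.iterate_succ_apply'] at a b
  rw [Function.iterate_succ_apply'] at b
  change fc c (uu c n k) < 0 at a
  change 0 < fc c (fc c (uu c n k)) at b
  have h : fc c (uu c n k) < -1.4 := by
    by_contra h
    push Not at h
    have : fc c (fc c (uu c n k)) = fc c (uu c n k) ^ 2 + c := rfl
    nlinarith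
  have : fc c (uu c n k) = uu c n k ^ 2 + c := rfl
  have h3 : uu c n k ^ 2 ≤ (4/5) ^ 2 := by linarith
  exact abs_le.1 (abs_le_of_sq_le_sq h3 (by norm_num))

lemma uu_rec {n : ℕ} {c : ℝ} (hc : c ∈ Kset n) (k : ℕ) :
    uu c n k = ss c n k * hh c (uu c n (k + 1)) := by
  obtain ⟨a, b⟩ := hc.2.2 k
  have e3 : uu c n (k + 1) = fc c (fc c (fc c (uu c n k))) := by
    unfold uu
    rw [← Function.iterate_succ_apply' (fc c), ← Function.iterate_succ_apply' (fc c),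
      ← Function.iterate_succ_apply' (fc c)]
    rfl
  rw [show n + 3 * k + 2 = n + 3 * k + 1 + 1 by ring] at b
  rw [Function.iterate_succ_apply'] at a b
  rw [Function.iterate_succ_apply'] at b
  change fc c (uu c n k) < 0 at a
  change 0 < fc c (fc c (uu c n k)) at b
  have inv : ∀ x, √(fc c x - c) = |x| := by
    intro x
    simp only [fc]
    rw [show x ^ 2 + c - c = x ^ 2 by ring, Real.sqrt_sq_eq_abs]
  have h1 : g1 c (uu c n (k + 1)) = fc c (fc c (uu c n k)) := by
    unfold g1; rw [e3, inv, abs_of_pos b]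
  have h2 : g2 c (uu c n (k + 1)) = - fc c (uu c n k) := by
    unfold g2; rw [h1, inv, abs_of_neg a]
  have h3 : hh c (uu c n (k + 1)) = |uu c n k| := by
    unfold hh; rw [h2, neg_neg, inv]
  rw [h3]
  unfold ss
  split_ifs with h
  · rw [abs_of_nonneg h]; ring
  · rw [abs_of_neg (by linarith)]; ring

lemma uu_bounds {n : ℕ} (hn : 5 ≤ n) {c : ℝ} (hc : c ∈ Kset n) (k : ℕ) :
    -0.52 ≤ uu c n k ∧ uu c n k ≤ 0.52 ∧ uu c n k ≠ 0 := by
  obtain ⟨c1, c2⟩ := c_bounds hn hc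
  have m := uu_mem hn hc (k + 1)
  obtain ⟨-, -, A⟩ := g_bounds c1 c2 m.1 m.2
  rw [uu_rec hc k]
  rcases ss_sign c n k with h | h <;> rw [h]
  · exact ⟨by linarith, by linarith, by intro h; linarith⟩
  · exact ⟨by linarith, by linarith, by intro h; linarith⟩

lemma ZZ_uu {n : ℕ} {c : ℝ} (hc : c ∈ Kset n) (K : ℕ) :
    ZZ c (ss c n) K (uu c n K) = uu c n 0 := by
  induction K with
  | zero => rfl
  | succ K ih =>
    change ZZ c (ss c n) K (ss c n K * hh c (uu c n (K + 1))) = _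
    rw [← uu_rec hc K, ih]

/-- The critical orbit never meets `0`. -/
lemma orbit_ne {n : ℕ} (hn : 5 ≤ n) {c : ℝ} (hc : c ∈ Kset n) (j : ℕ) : (fc c)^[j] c ≠ 0 := by
  rcases Nat.lt_or_ge j n with h | h
  · rcases Nat.eq_zero_or_pos j with rfl | h0
    · exact hc.1.ne
    · exact (hc.2.1 j h0 (by omega)).ne'
  · obtain ⟨i, rfl⟩ := Nat.exists_eq_add_of_le h
    have hi : i = 3 * (i / 3) ∨ i = 3 * (i / 3) + 1 ∨ i = 3 * (i / 3) + 2 := by omega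
    rcases hi with e | e | e
    · rw [e]; exact (uu_bounds hn hc (i / 3)).2.2
    · rw [e]; exact (hc.2.2 (i / 3)).1.ne
    · rw [e]; exact (hc.2.2 (i / 3)).2.ne'

lemma LL_orbit {n : ℕ} {c : ℝ} (hc : c ∈ Kset n) (j : ℕ) (hj : j + 1 ≤ n) :
    LL c j ((fc c)^[j + 1] c) = fc c c := by
  induction j with
  | zero => rfl
  | succ j ih =>
    change LL c j √((fc c)^[j + 1 + 1] c - c) = _
    rw [Function.iterate_succ_apply']
    have p := hc.2.1 (j + 1) (by omega) (by omega)
    rw [← ih (by omega)]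
    congr 1
    conv_lhs => simp only [fc]
    rw [add_sub_cancel_right, Real.sqrt_sq_eq_abs]
    exact abs_of_pos p

/-- The interval `I_c` is forward invariant and contained in `[-2,2]`. -/
lemma I_inv {c x : ℝ} (c1 : -2 < c) (c2 : c < -1.98) (hx : x ∈ Set.Icc c (c ^ 2 + c)) (j : ℕ) :
    (fc c)^[j] x ∈ Set.Icc c (c ^ 2 + c) := by
  induction j with
  | zero => exact hx
  | succ j ih =>
    rw [Function.iterate_succ_apply']
    obtain ⟨a, b⟩ := ih
    simp only [fc] at a b ⊢
    constructor
    · nlinarith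
    · have : (fc c)^[j] x ≤ -c := by nlinarith
      have : (fc c)^[j] x ^ 2 ≤ (-c) ^ 2 := sq_le_sq' (by linarith) this
      linarith

lemma I_abs {c x : ℝ} (c1 : -2 < c) (c2 : c < -1.98) (hx : x ∈ Set.Icc c (c ^ 2 + c)) :
    |2 * x| ≤ 4 := by
  obtain ⟨a, b⟩ := hx
  rw [abs_le]; constructor <;> nlinarith

/-- Existence of the periodic points. -/
lemma exists_periodic {n : ℕ} (hn : 5 ≤ n) {c : ℝ} (hc : c ∈ Kset n) (K : ℕ) :
    ∃ y : ℝ, 0 ≤ y ∧ y ≤ 3/5 ∧ (fc c)^[(1 + n) + 3 * K + 4] y = y ∧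
      ∃ w : ℝ, -(4/5) ≤ w ∧ w ≤ 4/5 ∧ (fc c)^[1 + n] y = ZZ c (ss c n) K w ∧
      y ^ 2 ≤ |ZZ c (ss c n) K w - ZZ c (ss c n) K (uu c n K)| := by
  obtain ⟨c1, c2⟩ := c_bounds hn hc
  obtain ⟨p, rfl⟩ : ∃ p, n = p + 1 := ⟨n - 1, by omega⟩
  set s := ss c (p + 1) with hs
  have hsg : ∀ k, s k = 1 ∨ s k = -1 := ss_sign c (p + 1)
  have ub := uu_bounds hn hc K
  have um := uu_mem hn hc 0
  have hu0 : LL c p (uu c (p + 1) 0) = fc c c := LL_orbit hc p le_rfl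
  -- choice of the sign
  obtain ⟨σ, hσ, hσ2⟩ : ∃ σ : ℝ, (σ = 1 ∨ σ = -1) ∧ ∀ t : ℝ, 0.55 ≤ t → t ≤ 0.65 →
      ZZ c s K (σ * t) ≤ uu c (p + 1) 0 := by
    rcases ZZ_mono (c := c) hsg K with h | h
    · refine ⟨-1, Or.inr rfl, fun t ht _ => ?_⟩
      rw [← ZZ_uu hc K]
      exact h (by linarith)
    · refine ⟨1, Or.inl rfl, fun t ht _ => ?_⟩
      rw [← ZZ_uu hc K]
      exact h (by linarith)
  set W : ℝ → ℝ := fun y => σ * hh c (-√(y - c)) with hW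
  have Wm : ∀ y, 0 ≤ y → y ≤ 3/5 → -(4/5) ≤ W y ∧ W y ≤ 4/5 := by
    intro y a b
    obtain ⟨⟨A, B⟩, -⟩ := glue_bounds c1 c2 a b
    simp only [hW]
    rcases hσ with h | h <;> rw [h] <;> constructor <;> linarith
  set V : ℝ → ℝ := fun y => LL c p (ZZ c s K (W y)) with hV
  have Vle : ∀ y, 0 ≤ y → y ≤ 3/5 → V y ≤ fc c c := by
    intro y a b
    obtain ⟨⟨A, B⟩, -⟩ := glue_bounds c1 c2 a b
    rw [← hu0]
    exact LL_mono c p (hσ2 _ A B)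
  have Vge : ∀ y, 0 ≤ y → y ≤ 3/5 → 1 ≤ V y := by
    intro y a b
    obtain ⟨A, B⟩ := Wm y a b
    obtain ⟨A, B⟩ := ZZ_mem c1 c2 hsg K _ A B
    obtain ⟨q, rfl⟩ : ∃ q, p = q + 1 := ⟨p - 1, by omega⟩
    exact LL_ge c2 q _ (sqrt_one c2 A)
  set T : ℝ → ℝ := fun y => √(-√(V y - c) - c) with hT
  have Tc : Continuous T := by
    have : Continuous V := by
      apply (LL_cont c p).comp
      apply (ZZ_cont c s K).comp
      simp only [hW]
      unfold hh g2 g1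
      fun_prop
    simp only [hT]
    fun_prop
  have Tm : Set.MapsTo T (Set.Icc 0 (3/5)) (Set.Icc 0 (3/5)) := by
    rintro y ⟨a, b⟩
    refine ⟨Real.sqrt_nonneg _, ?_⟩
    have h1 := Vge y a b
    have : 1.7 ≤ √(V y - c) := by apply Real.le_sqrt_of_sq_le; linarith
    simp only [hT]
    apply Real.sqrt_le_iff.2
    constructor <;> linarith
  obtain ⟨y, ⟨y0, y1⟩, hy⟩ := exists_mem_Icc_isFixedPt_of_mapsTo Tc.continuousOn
    (by norm_num) Tm
  have hy : √(-√(V y - c) - c) = y := hy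
  obtain ⟨w1, w2⟩ := Wm y y0 y1
  obtain ⟨z1, z2⟩ := ZZ_mem c1 c2 hsg K _ w1 w2
  have vge := Vge y y0 y1
  have vle := Vle y y0 y1
  have fcc : fc c c = c ^ 2 + c := rfl
  have hsq : √(V y - c) ≤ -c := by
    apply Real.sqrt_le_iff.2
    constructor
    · linarith
    · linarith
  have ysq : y ^ 2 = -√(V y - c) - c := by
    have := Real.sq_sqrt (x := -√(V y - c) - c) (by linarith)
    rwa [hy] at this
  have f1 : fc c y = -√(V y - c) := by simp only [fc]; linarith
  have f2 : fc c (fc c y) = V y := by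
    rw [f1]; simp only [fc]; rw [neg_sq, Real.sq_sqrt (by linarith)]; ring
  have f3 : (fc c)^[1 + (p + 1)] y = ZZ c s K (W y) := by
    rw [show 1 + (p + 1) = p + 1 + 1 by ring, Function.iterate_succ_apply,
      Function.iterate_succ_apply, f2]
    exact LL_iter c2 p _ z1
  have f4 : (fc c)^[3 * K] (ZZ c s K (W y)) = W y := ZZ_iter c1 c2 hsg K _ w1 w2
  have f5 : (fc c)^[4] (W y) = y := by
    obtain ⟨-, A, B, C, D⟩ := glue_bounds c1 c2 y0 y1
    have : fc c (W y) = fc c (hh c (-√(y - c))) := by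
      simp only [hW, fc]
      rcases hσ with h | h <;> rw [h] <;> ring
    simp only [Function.iterate_succ_apply, Function.iterate_zero, id]
    rw [this, A, B, C, D]
  refine ⟨y, y0, y1, ?_, W y, w1, w2, f3, ?_⟩
  · rw [show 1 + (p + 1) + 3 * K + 4 = 4 + (3 * K + (1 + (p + 1))) by ring,
      Function.iterate_add_apply, Function.iterate_add_apply, f3, f4, f5]
  · rw [ZZ_uu hc K, ysq]
    have k1 := LL_contr c2 p _ _ z1 um.1
    rw [hu0] at k1
    have k2 := sqrt_contr (c := c) (w := V y) (w' := fc c c) c2 (by linarith) (by linarith)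
    have k3 : √(fc c c - c) = -c := by
      rw [fcc, add_sub_cancel_right, Real.sqrt_sq_eq_abs, abs_of_neg (by linarith)]
    rw [k3] at k2
    have k4 := neg_abs_le (√(V y - c) - -c)
    have : |V y - fc c c| ≤ |ZZ c s K (W y) - uu c (p + 1) 0| := k1
    linarith

/-- `|Df^m(c)|`. -/
noncomputable def XX (c : ℝ) (m : ℕ) : ℝ := ∏ j ∈ Finset.range m, |2 * (fc c)^[j] c|

lemma XX_pos {n : ℕ} (hn : 5 ≤ n) {c : ℝ} (hc : c ∈ Kset n) (m : ℕ) : 0 < XX c m :=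
  Finset.prod_pos fun j _ => abs_pos.2 (mul_ne_zero two_ne_zero (orbit_ne hn hc j))

lemma XX_split {n : ℕ} {c : ℝ} (hc : c ∈ Kset n) (K : ℕ) :
    XX c (n + 3 * K) = XX c n * QQ c (ss c n) K (uu c n K) := by
  unfold XX QQ
  rw [Finset.prod_range_add, ZZ_uu hc K]
  congr 1
  apply Finset.prod_congr rfl
  intro j _
  rw [Nat.add_comm, Function.iterate_add_apply]
  rfl

lemma prod_le_four {c x : ℝ} (c1 : -2 < c) (c2 : c < -1.98) (hx : x ∈ Set.Icc c (c ^ 2 + c))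
    (m : ℕ) : ∏ j ∈ Finset.range m, |2 * (fc c)^[j] x| ≤ 4 ^ m := by
  have := Finset.prod_le_prod (s := Finset.range m) (f := fun j => |2 * (fc c)^[j] x|)
    (g := fun _ => (4 : ℝ)) (fun j _ => abs_nonneg _)
    (fun j _ => I_abs c1 c2 (I_inv c1 c2 hx j))
  simpa using this

lemma periodic_est {n : ℕ} (hn : 5 ≤ n) {c : ℝ} (hc : c ∈ Kset n) :
    ∃ C : ℝ, ∀ K : ℕ, ∃ y : ℝ, y ∈ Set.Icc c (c ^ 2 + c) ∧
      (fc c)^[(1 + n) + 3 * K + 4] y = y ∧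
      ∑ j ∈ Finset.range ((1 + n) + 3 * K + 4), Real.log |2 * (fc c)^[j] y| ≤
        C + Real.log (XX c (n + 3 * K)) / 2 := by
  obtain ⟨c1, c2⟩ := c_bounds hn hc
  refine ⟨(n + 5) * Real.log 4 + (Real.log 4 + 72) / 4 - Real.log (XX c n) / 2, fun K => ?_⟩
  obtain ⟨y, y0, y1, per, w, w1, w2, hz, hy2⟩ := exists_periodic hn hc K
  have yI : y ∈ Set.Icc c (c ^ 2 + c) := ⟨by linarith, by nlinarith⟩
  refine ⟨y, yI, per, ?_⟩
  have hsg := ss_sign c n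
  set s := ss c n with hs
  obtain ⟨um1, um2⟩ := uu_mem hn hc K
  -- the orbit avoids zero
  have hne : ∀ j < (1 + n) + 3 * K + 4, (fc c)^[j] y ≠ 0 := by
    intro j hj h0
    obtain ⟨i, hi⟩ := Nat.exists_eq_add_of_lt hj
    have h1 : (fc c)^[(1 + n) + 3 * K + 4] 0 = 0 := by
      rw [← h0, ← Function.iterate_add_apply, Nat.add_comm, Function.iterate_add_apply, per]
    rw [show (1 + n) + 3 * K + 4 = (n + 3 * K + 4) + 1 by ring, Function.iterate_succ_apply] at h1
    have : fc c 0 = c := by simp [fc]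
    rw [this] at h1
    exact orbit_ne hn hc _ h1
  have ypos : 0 < y := lt_of_le_of_ne y0 (Ne.symm (hne 0 (by omega)))
  rw [← Real.log_prod (fun j hj => (abs_pos.2 (mul_ne_zero two_ne_zero
    (hne j (Finset.mem_range.1 hj)))).ne')]
  have Q1 := QQ_one c1 c2 hsg K w w1 w2
  have Q1' := QQ_one c1 c2 hsg K _ um1 um2
  obtain ⟨dist, am⟩ := QQ_dist c1 c2 hsg K w (uu c n K) w1 w2 um1 um2
  set Qw := QQ c s K w with hQw
  set Qu := QQ c s K (uu c n K) with hQu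
  -- upper bound for the full product
  have prodle : ∏ j ∈ Finset.range ((1 + n) + 3 * K + 4), |2 * (fc c)^[j] y| ≤
      4 ^ (n + 5) * (y * Qw) := by
    rw [Finset.prod_range_add, Finset.prod_range_add, Finset.prod_range_add]
    have t1 : ∏ j ∈ Finset.range 1, |2 * (fc c)^[j] y| = 2 * y := by
      simp [abs_of_pos ypos]
    have gen : ∀ i m, ∏ j ∈ Finset.range m, |2 * (fc c)^[i + j] y| =
        ∏ j ∈ Finset.range m, |2 * (fc c)^[j] ((fc c)^[i] y)| := by
      intro i m
      apply Finset.prod_congr rfl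
      intro j _
      rw [Nat.add_comm, Function.iterate_add_apply]
    have t2 : ∏ j ∈ Finset.range n, |2 * (fc c)^[1 + j] y| ≤ 4 ^ n := by
      rw [gen]; exact prod_le_four c1 c2 (I_inv c1 c2 yI 1) n
    have t3 : ∏ j ∈ Finset.range (3 * K), |2 * (fc c)^[1 + n + j] y| = Qw := by
      rw [gen, hz]; rfl
    have t4 : ∏ j ∈ Finset.range 4, |2 * (fc c)^[1 + n + 3 * K + j] y| ≤ 4 ^ 4 := by
      rw [gen]; exact prod_le_four c1 c2 (I_inv c1 c2 yI _) 4
    rw [t1, t3]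
    have n2 : 0 ≤ ∏ j ∈ Finset.range n, |2 * (fc c)^[1 + j] y| :=
      Finset.prod_nonneg fun _ _ => abs_nonneg _
    calc _ ≤ 4 * y * 4 ^ n * Qw * 4 ^ 4 := by
          have : 2 * y ≤ 4 * y := by linarith
          gcongr
      _ = _ := by ring
  -- logarithmic estimates
  have hww : |w - uu c n K| ≤ 2 := by rw [abs_le]; constructor <;> linarith
  have d1 : Real.log Qw ≤ Real.log Qu + 24 := by
    have h := Real.log_le_log (by linarith) dist
    rw [Real.log_mul (by linarith) (Real.exp_pos _).ne', Real.log_exp] at h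
    linarith
  have a1 : y ^ 4 * (Qw * Qu) ≤ 4 := by
    have : y ^ 4 ≤ (ZZ c s K w - ZZ c s K (uu c n K)) ^ 2 := by
      rw [← sq_abs (ZZ c s K w - ZZ c s K (uu c n K)), show y ^ 4 = (y ^ 2) ^ 2 by ring]
      gcongr
    calc _ ≤ (ZZ c s K w - ZZ c s K (uu c n K)) ^ 2 * (Qw * Qu) := by gcongr
      _ ≤ (w - uu c n K) ^ 2 := am
      _ ≤ 4 := by rw [← sq_abs]; nlinarith [abs_nonneg (w - uu c n K)]
  have a2 : 4 * Real.log y + (Real.log Qw + Real.log Qu) ≤ Real.log 4 := by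
    have h := Real.log_le_log (by positivity) a1
    rw [Real.log_mul (by positivity) (by positivity), Real.log_mul (by positivity)
      (by positivity), Real.log_pow] at h
    exact_mod_cast h
  have a3 : Real.log (XX c (n + 3 * K)) = Real.log (XX c n) + Real.log Qu := by
    rw [XX_split hc, Real.log_mul (XX_pos hn hc n).ne' (by positivity)]
  have a4 : Real.log (∏ j ∈ Finset.range ((1 + n) + 3 * K + 4), |2 * (fc c)^[j] y|) ≤
      (n + 5) * Real.log 4 + (Real.log y + Real.log Qw) := by
    have h := Real.log_le_log (Finset.prod_pos fun j hj => abs_pos.2 (mul_ne_zero two_ne_zero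
      (hne j (Finset.mem_range.1 hj)))) prodle
    rw [Real.log_mul (by positivity) (by positivity), Real.log_mul (by positivity)
      (by positivity), Real.log_pow] at h
    exact_mod_cast h
  linarith

/-- The invariant measure carried by a periodic orbit. -/
lemma periodic_measure {c y : ℝ} {N : ℕ} (hN : 0 < N) (per : (fc c)^[N] y = y)
    (hI : ∀ j, (fc c)^[j] y ∈ Set.Icc c (c ^ 2 + c)) :
    ∃ μ : Measure ℝ, IsProbabilityMeasure μ ∧
      Measure.map (fc c) μ = μ ∧ μ (Set.Icc c (c ^ 2 + c))ᶜ = 0 ∧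
      Integrable (fun x => Real.log |2 * x|) μ ∧
      ∫ x, Real.log |2 * x| ∂μ =
        (N : ℝ)⁻¹ * ∑ j ∈ Finset.range N, Real.log |2 * (fc c)^[j] y| := by
  have hf : Measurable (fc c) := by unfold fc; fun_prop
  have hNN : (N : ENNReal) ≠ 0 := by exact_mod_cast hN.ne'
  have hint : ∀ j ∈ Finset.range N,
      Integrable (fun x => Real.log |2 * x|) (Measure.dirac ((fc c)^[j] y)) := by
    intro j _
    exact integrable_dirac (by simp [enorm_lt_top])
  refine ⟨(N : ENNReal)⁻¹ • ∑ j ∈ Finset.range N, Measure.dirac ((fc c)^[j] y), ?_, ?_, ?_, ?_, ?_⟩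
  · constructor
    simp only [Measure.smul_apply, Measure.finsetSum_apply, measure_univ, Finset.sum_const,
      Finset.card_range, smul_eq_mul, nsmul_eq_mul, mul_one]
    exact ENNReal.inv_mul_cancel hNN (ENNReal.natCast_ne_top N)
  · rw [Measure.map_smul]
    congr 1
    rw [← Measure.mapₗ_apply_of_measurable hf, map_sum]
    have e : ∀ j, Measure.mapₗ (fc c) (Measure.dirac ((fc c)^[j] y)) =
        Measure.dirac ((fc c)^[j + 1] y) := by
      intro j
      rw [Measure.mapₗ_apply_of_measurable hf, Measure.map_dirac' hf,
        Function.iterate_succ_apply']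
    simp only [e]
    obtain ⟨M, rfl⟩ : ∃ M, N = M + 1 := ⟨N - 1, by omega⟩
    rw [Finset.sum_range_succ, Finset.sum_range_succ', per]
    rfl
  · simp only [Measure.smul_apply, Measure.finsetSum_apply, smul_eq_mul]
    rw [Finset.sum_eq_zero, mul_zero]
    intro j _
    rw [Measure.dirac_apply' _ measurableSet_Icc.compl]
    simp only [Set.indicator_apply_eq_zero]
    intro h
    exact absurd (hI j) h
  · apply Integrable.smul_measure _ (ENNReal.inv_ne_top.2 hNN)
    exact integrable_finsetSum_measure.2 hint
  · rw [integral_smul_measure, integral_finsetSum_measure hint]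
    simp

lemma XX_comp {n : ℕ} (hn : 5 ≤ n) {c : ℝ} (hc : c ∈ Kset n) (m : ℕ) (hm : n ≤ m) :
    ∃ K : ℕ, m ≤ n + 3 * K ∧
      Real.log (XX c (n + 3 * K)) ≤ Real.log (XX c m) + 2 * Real.log 4 := by
  obtain ⟨c1, c2⟩ := c_bounds hn hc
  obtain ⟨i, hi⟩ : ∃ i, n + 3 * ((m - n + 2) / 3) = m + i ∧ i ≤ 2 :=
    ⟨n + 3 * ((m - n + 2) / 3) - m, by omega, by omega⟩
  refine ⟨(m - n + 2) / 3, by omega, ?_⟩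
  rw [hi.1]
  have cI : c ∈ Set.Icc c (c ^ 2 + c) := ⟨le_rfl, by nlinarith⟩
  have h : XX c (m + i) ≤ XX c m * 4 ^ i := by
    have h0 := prod_le_four c1 c2 (I_inv c1 c2 cI m) i
    have h1 := (XX_pos hn hc m).le
    have : XX c (m + i) = XX c m * ∏ j ∈ Finset.range i, |2 * (fc c)^[j] ((fc c)^[m] c)| := by
      unfold XX
      rw [Finset.prod_range_add]
      congr 1
      apply Finset.prod_congr rfl
      intro j _
      rw [Nat.add_comm, Function.iterate_add_apply]
    rw [this]
    gcongr
  have h2 := Real.log_le_log (XX_pos hn hc _) h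
  rw [Real.log_mul (XX_pos hn hc m).ne' (by positivity), Real.log_pow] at h2
  have h3 : (i : ℝ) ≤ 2 := by exact_mod_cast hi.2
  have h4 : 0 ≤ Real.log 4 := Real.log_nonneg (by norm_num)
  nlinarith

lemma chi_nonneg_and_freq {n : ℕ} (hn : 5 ≤ n) {c : ℝ} (hc : c ∈ Kset n) :
    0 ≤ chiCrit c ∧ ∀ ε : ℝ, 0 < ε → ∀ M : ℕ, ∃ m : ℕ, M ≤ m ∧ 0 < m ∧
      Real.log (XX c m) ≤ m * (chiCrit c + ε) := by
  obtain ⟨c1, c2⟩ := c_bounds hn hc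
  have cI : c ∈ Set.Icc c (c ^ 2 + c) := ⟨le_rfl, by nlinarith⟩
  have upper : ∀ m : ℕ, 1 / (m : ℝ) * Real.log (XX c m) ≤ Real.log 4 := by
    intro m
    have h := Real.log_le_log (XX_pos hn hc m) (prod_le_four c1 c2 cI m)
    rw [Real.log_pow] at h
    have h4 : 0 ≤ Real.log 4 := Real.log_nonneg (by norm_num)
    rcases Nat.eq_zero_or_pos m with rfl | hm
    · simpa using h4
    · have : (0:ℝ) < m := by exact_mod_cast hm
      rw [one_div, inv_mul_le_iff₀ this]
      exact h
  have cob : Filter.IsCoboundedUnder (· ≥ ·) Filter.atTop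
      (fun m : ℕ => 1 / (m : ℝ) * Real.log (XX c m)) :=
    Filter.isCoboundedUnder_ge_of_le Filter.atTop upper
  have chi : chiCrit c =
    Filter.liminf (fun m : ℕ => 1 / (m : ℝ) * Real.log (XX c m)) Filter.atTop := rfl
  obtain ⟨B, hB⟩ : ∃ B : ℝ, ∀ m, n ≤ m → B ≤ Real.log (XX c m) := by
    refine ⟨Real.log (XX c n) - 2 * Real.log 4, fun m hm => ?_⟩
    obtain ⟨K, -, hK⟩ := XX_comp hn hc m hm
    obtain ⟨um1, um2⟩ := uu_mem hn hc K
    have Q1 := QQ_one c1 c2 (ss_sign c n) K _ um1 um2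
    rw [XX_split hc, Real.log_mul (XX_pos hn hc n).ne' (by linarith)] at hK
    have := Real.log_nonneg Q1
    linarith
  constructor
  · apply le_of_forall_pos_le_add
    intro ε hε
    have : -ε ≤ chiCrit c := by
      rw [chi]
      apply Filter.le_liminf_of_le cob
      have ht : Filter.Tendsto (fun m : ℕ => 1 / (m : ℝ) * B) Filter.atTop (nhds (0 * B)) :=
        tendsto_one_div_atTop_nhds_zero_nat.mul_const B
      rw [zero_mul] at ht
      filter_upwards [ht.eventually (lt_mem_nhds (show -ε < 0 by linarith)),
        Filter.eventually_ge_atTop n] with m h1 h2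
      have := hB m h2
      have : 1 / (m : ℝ) * B ≤ 1 / (m : ℝ) * Real.log (XX c m) := by gcongr
      linarith
    linarith
  · intro ε hε M
    have fr := Filter.frequently_lt_of_liminf_lt cob
      (show Filter.liminf (fun m : ℕ => 1 / (m : ℝ) * Real.log (XX c m)) Filter.atTop <
        chiCrit c + ε by rw [← chi]; linarith)
    obtain ⟨m, hm, h⟩ := (Filter.frequently_atTop.1 fr) (M + 1)
    have hm0 : (0:ℝ) < m := by exact_mod_cast (by omega : 0 < m)
    refine ⟨m, by omega, by omega, ?_⟩
    rw [one_div, inv_mul_lt_iff₀ hm0] at h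
    exact h.le

lemma exists_measure {n : ℕ} (hn : 5 ≤ n) {c : ℝ} (hc : c ∈ Kset n) (ε : ℝ) (hε : 0 < ε) :
    ∃ μ : Measure ℝ, IsProbabilityMeasure μ ∧
      Measure.map (fc c) μ = μ ∧ μ (Set.Icc c (c ^ 2 + c))ᶜ = 0 ∧
      Integrable (fun x => Real.log |2 * x|) μ ∧
      ∫ x, Real.log |2 * x| ∂μ ≤ chiCrit c / 2 + ε := by
  obtain ⟨c1, c2⟩ := c_bounds hn hc
  obtain ⟨chi0, fr⟩ := chi_nonneg_and_freq hn hc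
  obtain ⟨C, hC⟩ := periodic_est hn hc
  obtain ⟨M, hM⟩ := exists_nat_gt ((C + Real.log 4) / (ε / 2))
  rw [div_lt_iff₀ (by linarith)] at hM
  obtain ⟨m, hm, hm0, hlog⟩ := fr ε hε (M + n)
  obtain ⟨K, hK1, hK2⟩ := XX_comp hn hc m (by omega)
  obtain ⟨y, yI, per, hsum⟩ := hC K
  obtain ⟨μ, h1, h2, h3, h4, h5⟩ := periodic_measure (N := (1 + n) + 3 * K + 4) (by omega) per
    (I_inv c1 c2 yI)
  refine ⟨μ, h1, h2, h3, h4, ?_⟩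
  rw [h5]
  have hN0 : (0:ℝ) < (((1 + n) + 3 * K + 4 : ℕ) : ℝ) := by exact_mod_cast (by omega)
  have hNm : (m : ℝ) ≤ (((1 + n) + 3 * K + 4 : ℕ) : ℝ) := by exact_mod_cast (by omega)
  have hNM : (M : ℝ) ≤ (((1 + n) + 3 * K + 4 : ℕ) : ℝ) := by exact_mod_cast (by omega)
  set N : ℝ := (((1 + n) + 3 * K + 4 : ℕ) : ℝ) with hN
  rw [inv_mul_le_iff₀ hN0]
  have e1 : (m : ℝ) * (chiCrit c + ε) ≤ N * (chiCrit c + ε) := by gcongr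
  have e2 : (M : ℝ) * (ε / 2) ≤ N * (ε / 2) := by gcongr
  linarith

theorem stmt_6 (n : ℕ) (hn : 5 ≤ n) (c : ℝ) (hc : c ∈ Kset n) :
    (∀ ε : ℝ, 0 < ε → ∃ μ : Measure ℝ, IsProbabilityMeasure μ ∧
      Measure.map (fc c) μ = μ ∧ μ (Set.Icc c (c ^ 2 + c))ᶜ = 0 ∧
      Integrable (fun x => Real.log |2 * x|) μ ∧
      ∫ x, Real.log |2 * x| ∂μ ≤ chiCrit c / 2 + ε) ∧
    sInf {v : ℝ | ∃ μ : Measure ℝ, IsProbabilityMeasure μ ∧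
      Measure.map (fc c) μ = μ ∧ μ (Set.Icc c (c ^ 2 + c))ᶜ = 0 ∧
      Integrable (fun x => Real.log |2 * x|) μ ∧
      v = ∫ x, Real.log |2 * x| ∂μ} ≤ chiCrit c / 2 := by
  refine ⟨fun ε hε => exists_measure hn hc ε hε, ?_⟩
  set S := {v : ℝ | ∃ μ : Measure ℝ, IsProbabilityMeasure μ ∧
      Measure.map (fc c) μ = μ ∧ μ (Set.Icc c (c ^ 2 + c))ᶜ = 0 ∧
      Integrable (fun x => Real.log |2 * x|) μ ∧
      v = ∫ x, Real.log |2 * x| ∂μ} with hS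
  by_cases hb : BddBelow S
  · apply le_of_forall_pos_le_add
    intro ε hε
    obtain ⟨μ, h1, h2, h3, h4, h5⟩ := exists_measure hn hc ε hε
    exact (csInf_le hb ⟨μ, h1, h2, h3, h4, rfl⟩).trans h5
  · rw [Real.sInf_of_not_bddBelow hb]
    linarith [(chi_nonneg_and_freq hn hc).1]
end

section
/- There exists a constant C > 0 such that for every integer n ≥ 5, every parameter c ∈ 𝒦_n, and every integer k ≥ 0, there exists a point x in the interval I_c = [c, c² + c] with f_c^{n+3k+3}(x) = x and |Df_c^{n+3k+3}(x)| ≤ C · |Df_c^{n+3k}(c)|^{1/2}. -/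
lemma sqle (a b : ℝ) (hb : 0 ≤ b) (h : a ^ 2 ≤ b ^ 2) : a ≤ b := by
  by_contra hh
  push Not at hh
  nlinarith

/-- Derivative product. -/
noncomputable def DP (c : ℝ) (m : ℕ) (x : ℝ) : ℝ := ∏ j ∈ Finset.range m, |2 * (fc c)^[j] x|

lemma fc_it (c x : ℝ) (m : ℕ) : (fc c)^[m + 1] x = ((fc c)^[m] x) ^ 2 + c := by
  rw [Function.iterate_succ_apply']; rfl

lemma DP_succ (c x : ℝ) (m : ℕ) : DP c (m + 1) x = DP c m x * |2 * (fc c)^[m] x| := by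
  unfold DP; rw [Finset.prod_range_succ]

lemma DP_nonneg (c x : ℝ) (m : ℕ) : 0 ≤ DP c m x :=
  Finset.prod_nonneg (fun _ _ => abs_nonneg _)

/-- Two point distortion inequality. -/
lemma lemA (c x z : ℝ) (m : ℕ) (h : ∀ j < m, 0 ≤ (fc c)^[j] x * (fc c)^[j] z) :
    DP c m x * DP c m z * (x - z) ^ 2 ≤ ((fc c)^[m] x - (fc c)^[m] z) ^ 2 := by
  induction m with
  | zero => simp [DP]
  | succ m ih =>
    have ih' := ih (fun j hj => h j (by omega))
    have hm := h m (by omega)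
    rw [DP_succ, DP_succ, fc_it, fc_it]
    set X := (fc c)^[m] x
    set Z := (fc c)^[m] z
    have e : |2 * X| * |2 * Z| = 4 * (X * Z) := by
      rw [← abs_mul, show 2 * X * (2 * Z) = 4 * (X * Z) by ring]
      exact abs_of_nonneg (by linarith)
    have e2 : 4 * (X * Z) ≤ (X + Z) ^ 2 := by nlinarith [sq_nonneg (X - Z)]
    calc DP c m x * |2 * X| * (DP c m z * |2 * Z|) * (x - z) ^ 2
        = (DP c m x * DP c m z * (x - z) ^ 2) * (|2 * X| * |2 * Z|) := by ring
      _ ≤ (X - Z) ^ 2 * (X + Z) ^ 2 := by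
          rw [e]
          exact mul_le_mul ih' e2 (by linarith) (sq_nonneg _)
      _ = _ := by ring

/-- Three point distortion inequality. -/
lemma lemB (c a q p : ℝ) (m : ℕ)
    (h1 : ∀ j < m, 0 ≤ (fc c)^[j] a * (fc c)^[j] q)
    (h2 : ∀ j < m, 0 ≤ (fc c)^[j] q * (fc c)^[j] p)
    (h3 : ∀ j < m, 0 ≤ (fc c)^[j] a * (fc c)^[j] p)
    (h0 : 0 ≤ (a - q) * (q - p)) :
    0 ≤ ((fc c)^[m] a - (fc c)^[m] q) * ((fc c)^[m] q - (fc c)^[m] p) ∧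
    |a - p| * |(fc c)^[m] a - (fc c)^[m] q| * |(fc c)^[m] q - (fc c)^[m] p| ≤
      DP c m q * |(fc c)^[m] a - (fc c)^[m] p| * (|a - q| * |q - p|) := by
  induction m with
  | zero =>
    refine ⟨h0, ?_⟩
    simp [DP, mul_assoc]
  | succ m ih =>
    obtain ⟨o, ih'⟩ := ih (fun j hj => h1 j (by omega)) (fun j hj => h2 j (by omega))
      (fun j hj => h3 j (by omega))
    have k1 := h1 m (by omega)
    have k2 := h2 m (by omega)
    have k3 := h3 m (by omega)
    rw [DP_succ, fc_it, fc_it, fc_it]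
    set A := (fc c)^[m] a
    set Q := (fc c)^[m] q
    set P := (fc c)^[m] p
    have hpos : 0 ≤ (A + Q) * (Q + P) := by nlinarith [sq_nonneg Q]
    have key : |A + Q| * |Q + P| ≤ |2 * Q| * |A + P| := by
      rw [← abs_mul, ← abs_mul, abs_of_nonneg hpos]
      refine le_trans ?_ (le_abs_self _)
      nlinarith
    have f1 : |A ^ 2 + c - (Q ^ 2 + c)| = |A - Q| * |A + Q| := by
      rw [← abs_mul]; congr 1; ring
    have f2 : |Q ^ 2 + c - (P ^ 2 + c)| = |Q - P| * |Q + P| := by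
      rw [← abs_mul]; congr 1; ring
    have f3 : |A ^ 2 + c - (P ^ 2 + c)| = |A - P| * |A + P| := by
      rw [← abs_mul]; congr 1; ring
    constructor
    · have : (A ^ 2 + c - (Q ^ 2 + c)) * (Q ^ 2 + c - (P ^ 2 + c)) =
        ((A - Q) * (Q - P)) * ((A + Q) * (Q + P)) := by ring
      rw [this]; exact mul_nonneg o hpos
    · rw [f1, f2, f3]
      calc |a - p| * (|A - Q| * |A + Q|) * (|Q - P| * |Q + P|)
          = (|a - p| * |A - Q| * |Q - P|) * (|A + Q| * |Q + P|) := by ring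
        _ ≤ (DP c m q * |A - P| * (|a - q| * |q - p|)) * (|2 * Q| * |A + P|) := by
            apply mul_le_mul ih' key (by positivity)
            have := DP_nonneg c q m
            positivity
        _ = _ := by ring

/-- Inverse branch of `f_c^m` on `D` sending `f_c^m(c)` to `c`. -/
structure Branch (c : ℝ) (m : ℕ) (D : Set ℝ) (ψ : ℝ → ℝ) : Prop where
  cont : ContinuousOn ψ D
  mono : StrictMonoOn ψ D ∨ StrictAntiOn ψ D
  inv : ∀ t ∈ D, (fc c)^[m] (ψ t) = t
  base : ψ ((fc c)^[m] c) = c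
  sgn : ∀ t ∈ D, ∀ t' ∈ D, ∀ j < m, 0 ≤ (fc c)^[j] (ψ t) * (fc c)^[j] (ψ t')

lemma Branch.restrict {c : ℝ} {m : ℕ} {D D' : Set ℝ} {ψ : ℝ → ℝ} (h : Branch c m D ψ)
    (hs : D' ⊆ D) : Branch c m D' ψ where
  cont := h.cont.mono hs
  mono := h.mono.imp (fun k => k.mono hs) (fun k => k.mono hs)
  inv := fun t ht => h.inv t (hs ht)
  base := h.base
  sgn := fun t ht t' ht' => h.sgn t (hs ht) t' (hs ht')

lemma Branch.stepPos {c : ℝ} {m : ℕ} {D D' : Set ℝ} {ψ : ℝ → ℝ} (h : Branch c m D ψ)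
    (hc : ∀ t ∈ D', c ≤ t) (hD : ∀ t ∈ D', Real.sqrt (t - c) ∈ D) (hp : 0 ≤ (fc c)^[m] c) :
    Branch c (m + 1) D' (fun t => ψ (Real.sqrt (t - c))) where
  cont := h.cont.comp (by fun_prop) hD
  mono := by
    have hr : StrictMonoOn (fun t => Real.sqrt (t - c)) D' := fun x hx y hy hxy =>
      Real.sqrt_lt_sqrt (by linarith [hc x hx]) (by linarith)
    rcases h.mono with k | k
    · left; exact fun x hx y hy hxy => k (hD x hx) (hD y hy) (hr hx hy hxy)
    · right; exact fun x hx y hy hxy => k (hD x hx) (hD y hy) (hr hx hy hxy)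
  inv := fun t ht => by
    rw [fc_it, h.inv _ (hD t ht), Real.sq_sqrt (by linarith [hc t ht])]; ring
  base := by
    simp only [fc_it]
    rw [add_sub_cancel_right, Real.sqrt_sq hp, h.base]
  sgn := fun t ht t' ht' j hj => by
    rcases Nat.lt_succ_iff_lt_or_eq.mp hj with h' | h'
    · exact h.sgn _ (hD t ht) _ (hD t' ht') j h'
    · subst h'
      rw [h.inv _ (hD t ht), h.inv _ (hD t' ht')]; positivity

lemma Branch.stepNeg {c : ℝ} {m : ℕ} {D D' : Set ℝ} {ψ : ℝ → ℝ} (h : Branch c m D ψ)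
    (hc : ∀ t ∈ D', c ≤ t) (hD : ∀ t ∈ D', -Real.sqrt (t - c) ∈ D) (hp : (fc c)^[m] c ≤ 0) :
    Branch c (m + 1) D' (fun t => ψ (-Real.sqrt (t - c))) where
  cont := h.cont.comp (by fun_prop) hD
  mono := by
    have hr : StrictAntiOn (fun t => -Real.sqrt (t - c)) D' := fun x hx y hy hxy =>
      neg_lt_neg (Real.sqrt_lt_sqrt (by linarith [hc x hx]) (by linarith))
    rcases h.mono with k | k
    · right; exact fun x hx y hy hxy => k (hD y hy) (hD x hx) (hr hx hy hxy)
    · left; exact fun x hx y hy hxy => k (hD y hy) (hD x hx) (hr hx hy hxy)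
  inv := fun t ht => by
    rw [fc_it, h.inv _ (hD t ht), neg_sq, Real.sq_sqrt (by linarith [hc t ht])]; ring
  base := by
    simp only [fc_it]
    rw [add_sub_cancel_right, Real.sqrt_sq_eq_abs, abs_of_nonpos hp, neg_neg, h.base]
  sgn := fun t ht t' ht' j hj => by
    rcases Nat.lt_succ_iff_lt_or_eq.mp hj with h' | h'
    · exact h.sgn _ (hD t ht) _ (hD t' ht') j h'
    · subst h'
      rw [h.inv _ (hD t ht), h.inv _ (hD t' ht'), neg_mul_neg]; positivity

lemma branch_first (c : ℝ) (hc : c < 0) (n : ℕ)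
    (h : ∀ j : ℕ, 1 ≤ j → j ≤ n → 0 < (fc c)^[j] c) :
    ∃ ψ, Branch c (n + 1) (Set.Ici c) ψ := by
  induction n with
  | zero =>
    have b0 : Branch c 0 Set.univ (fun t => t) :=
      ⟨continuousOn_id, Or.inl (fun _ _ _ _ h => h), fun _ _ => rfl, rfl,
        fun _ _ _ _ j hj => absurd hj (Nat.not_lt_zero j)⟩
    exact ⟨_, b0.stepNeg (D' := Set.Ici c) (fun t ht => ht) (fun _ _ => trivial) hc.le⟩
  | succ n ih =>
    obtain ⟨ψ, hψ⟩ := ih (fun j h1 h2 => h j h1 (by omega))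
    refine ⟨_, hψ.stepPos (D' := Set.Ici c) (fun t ht => ht) (fun t _ => ?_)
      (h (n + 1) (by omega) le_rfl).le⟩
    exact le_trans hc.le (Real.sqrt_nonneg _)

lemma branch_all (c v : ℝ) (n : ℕ) (hn : 5 ≤ n) (hK : c ∈ Kset n) (hv0 : 0 ≤ v)
    (hv1 : v ≤ -c) (hv2 : v ≤ (c ^ 2 + c) ^ 2 + c) (hv3 : 0 ≤ c + v ^ 2) (hx1 : 0 ≤ c ^ 2 + c)
    (k : ℕ) : ∃ ψ, Branch c (n + 3 * k) (Set.Icc (-v) v) ψ := by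
  obtain ⟨hc, hpos, hk⟩ := hK
  induction k with
  | zero =>
    obtain ⟨m, rfl⟩ : ∃ m, n = m + 1 := ⟨n - 1, by omega⟩
    obtain ⟨ψ, hψ⟩ := branch_first c hc m (fun j h1 h2 => hpos j h1 (by omega))
    exact ⟨ψ, hψ.restrict (fun t ht => by have := ht.1; simp only [Set.mem_Ici]; linarith)⟩
  | succ k ih =>
    obtain ⟨ψ, hψ⟩ := ih
    obtain ⟨s1, s2⟩ := hk k
    have b1 : ∃ ψ1, Branch c (n + 3 * k + 1) (Set.Icc c (c + v ^ 2)) ψ1 := by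
      have hle : ∀ t ∈ Set.Icc c (c + v ^ 2), Real.sqrt (t - c) ≤ v := fun t ht =>
        Real.sqrt_le_iff.mpr ⟨hv0, by linarith [ht.2]⟩
      rcases le_total 0 ((fc c)^[n + 3 * k] c) with h | h
      · refine ⟨_, hψ.stepPos (fun t ht => ht.1) (fun t ht => ⟨?_, hle t ht⟩) h⟩
        linarith [Real.sqrt_nonneg (t - c)]
      · refine ⟨_, hψ.stepNeg (fun t ht => ht.1) (fun t ht => ⟨?_, ?_⟩) h⟩
        · linarith [hle t ht]
        · linarith [Real.sqrt_nonneg (t - c)]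
    obtain ⟨ψ1, h1⟩ := b1
    have h2 := h1.stepNeg (D' := Set.Icc c (c ^ 2 + c)) (fun t ht => ht.1) (fun t ht => by
      have e : Real.sqrt (t - c) ≤ -c :=
        Real.sqrt_le_iff.mpr ⟨by linarith, by linarith [ht.2, neg_sq c]⟩
      exact ⟨by linarith, by linarith [Real.sqrt_nonneg (t - c)]⟩) s1.le
    have h3 := h2.stepPos (D' := Set.Icc (-v) v) (fun t ht => by linarith [ht.1]) (fun t ht => by
      have e : Real.sqrt (t - c) ≤ c ^ 2 + c :=
        Real.sqrt_le_iff.mpr ⟨hx1, by linarith [ht.2]⟩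
      exact ⟨by linarith [Real.sqrt_nonneg (t - c)], e⟩) s2.le
    exact ⟨_, h3⟩

lemma c_ge (c : ℝ) (n : ℕ) (hK : c ∈ Kset n) : -2 ≤ c := by
  by_contra hlt
  push Not at hlt
  have : ∀ j, -c ≤ (fc c)^[j + 1] c := by
    intro j
    induction j with
    | zero => simp only [zero_add, Function.iterate_one, fc]; nlinarith
    | succ j ih => rw [fc_it]; nlinarith
  have h1 := this (n + 3 * 0)
  have h2 := (hK.2.2 0).1
  linarith

lemma final_real (d r e : ℝ) (hr : 0 ≤ r) (hd : 0 ≤ d) (he : 0 ≤ e)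
    (h1 : e * r ^ 2 * (d ^ 2) ^ 2 ≤ 16) (h2 : 1 / 16 ≤ r ^ 2 * d ^ 2) :
    e * d ≤ 1024 * r := by
  have h3 : 1 / 4 ≤ r * d := by
    have : 0 ≤ r * d := by positivity
    nlinarith
  have h4 : (1 / 4 : ℝ) ^ 3 ≤ (r * d) ^ 3 := pow_le_pow_left₀ (by norm_num) h3 3
  have h5 : e * d * (1 / 4 : ℝ) ^ 3 ≤ e * d * (r * d) ^ 3 :=
    mul_le_mul_of_nonneg_left h4 (by positivity)
  have h6 : e * d * (r * d) ^ 3 = e * r ^ 2 * (d ^ 2) ^ 2 * r := by ring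
  have h7 : e * r ^ 2 * (d ^ 2) ^ 2 * r ≤ 16 * r := mul_le_mul_of_nonneg_right h1 hr
  nlinarith

/-- Metric estimate: given the points, bound the derivative. -/
lemma estimate (c a p s v : ℝ) (m : ℕ) (hs1 : 1 ≤ s) (hs2 : s ≤ 2) (hcs : c = -s ^ 2)
    (hv0 : 0 ≤ v) (hv : v ^ 2 = s ^ 2 + s) (hv2 : v ≤ 2)
    (h1 : ∀ j < m, 0 ≤ (fc c)^[j] a * (fc c)^[j] c)
    (h2 : ∀ j < m, 0 ≤ (fc c)^[j] c * (fc c)^[j] p)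
    (h3 : ∀ j < m, 0 ≤ (fc c)^[j] a * (fc c)^[j] p)
    (hac : a < c) (hcp : c < p) (hy : ((fc c)^[m] c) ^ 2 ≤ s ^ 2 - s)
    (ha : |(fc c)^[m] a| = v) (hp1 : s ≤ |(fc c)^[m] p|) (hp2 : |(fc c)^[m] p| ≤ v)
    (hper : (fc c)^[m + 3] p = p) :
    DP c (m + 3) p ≤ 32768 * Real.sqrt (DP c m c) := by
  have A := lemA c p c m (fun j hj => by rw [mul_comm]; exact h2 j hj)
  have B := (lemB c a c p m h1 h2 h3 (by nlinarith)).2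
  have hdp := DP_nonneg c p m
  have hdc := DP_nonneg c c m
  have i1 := fc_it c p m
  have i2 := fc_it c p (m + 1)
  have i3 : (fc c)^[m + 3] p = ((fc c)^[m + 2] p) ^ 2 + c := fc_it c p (m + 2)
  rw [hper] at i3
  rw [DP_succ, DP_succ, DP_succ]
  change _ * _ * _ * |2 * (fc c)^[m + 2] p| ≤ _
  set Fp := (fc c)^[m] p
  set Fa := (fc c)^[m] a
  set y := (fc c)^[m] c
  set P1 := (fc c)^[m + 1] p
  set P2 := (fc c)^[m + 2] p
  have hyabs : |y| ≤ s - 1 / 2 := abs_le_of_sq_le_sq (by nlinarith) (by linarith)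
  have hsv : s ≤ v := hp1.trans hp2
  have g1 : 1 / 2 ≤ |Fa - y| := by
    have := abs_sub_abs_le_abs_sub Fa y
    linarith
  have g2 : 1 / 2 ≤ |y - Fp| := by
    have := abs_sub_abs_le_abs_sub Fp y
    rw [abs_sub_comm] at this
    linarith
  have g3 : |Fa - Fp| ≤ 4 := by
    have := abs_sub Fa Fp
    linarith
  have g4 : |Fp - y| ≤ 4 := by
    have := abs_sub Fp y
    linarith
  have gap : |a - c| ≤ |a - p| := by
    rw [abs_of_neg (by linarith), abs_of_neg (by linarith)]; linarith
  have gpos : 0 < |a - c| := abs_pos.mpr (by linarith)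
  have hcp' : |c - p| = p - c := by rw [abs_of_neg (by linarith)]; ring
  have B2 : 1 / 16 ≤ DP c m c * (p - c) := by
    rw [hcp'] at B
    have l : |a - c| * (1 / 2) * (1 / 2) ≤ |a - p| * |Fa - y| * |y - Fp| := by gcongr
    have u : DP c m c * |Fa - Fp| * (|a - c| * (p - c)) ≤ DP c m c * 4 * (|a - c| * (p - c)) := by
      have : 0 ≤ p - c := by linarith
      gcongr
    have : |a - c| * (1 / 4) ≤ |a - c| * (DP c m c * (p - c) * 4) := by linarith
    have := le_of_mul_le_mul_left this gpos
    linarith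
  have A2 : DP c m p * DP c m c * (p - c) ^ 2 ≤ 16 := by
    refine A.trans ?_
    rw [← sq_abs]; nlinarith [abs_nonneg (Fp - y)]
  have hP2 : |P2| = Real.sqrt (p - c) := by
    rw [← Real.sqrt_sq_eq_abs]; congr 1; linarith
  have hP1 : |P1| ≤ 2 := by
    rw [i1, abs_le]
    have q1 : s ^ 2 ≤ Fp ^ 2 := by rw [← sq_abs Fp]; gcongr
    have q2 : Fp ^ 2 ≤ v ^ 2 := by rw [← sq_abs Fp]; gcongr
    constructor <;> linarith
  have fin := final_real (Real.sqrt (p - c)) (Real.sqrt (DP c m c)) (DP c m p)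
    (Real.sqrt_nonneg _) (Real.sqrt_nonneg _) hdp
    (by rw [Real.sq_sqrt hdc, Real.sq_sqrt (by linarith)]; exact A2)
    (by rw [Real.sq_sqrt hdc, Real.sq_sqrt (by linarith)]; exact B2)
  rw [abs_mul, abs_mul, abs_mul, hP2, abs_two]
  calc DP c m p * (2 * |Fp|) * (2 * |P1|) * (2 * Real.sqrt (p - c))
      ≤ DP c m p * (2 * 2) * (2 * 2) * (2 * Real.sqrt (p - c)) := by
        have : |Fp| ≤ 2 := by linarith
        gcongr
    _ = 32 * (DP c m p * Real.sqrt (p - c)) := by ring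
    _ ≤ _ := by linarith

theorem stmt_7 :
    ∃ C : ℝ, 0 < C ∧ ∀ n : ℕ, 5 ≤ n → ∀ c ∈ Kset n, ∀ k : ℕ,
      ∃ x ∈ Set.Icc c (c ^ 2 + c), (fc c)^[n + 3 * k + 3] x = x ∧
        ∏ j ∈ Finset.range (n + 3 * k + 3), |2 * (fc c)^[j] x| ≤
          C * Real.sqrt (∏ j ∈ Finset.range (n + 3 * k), |2 * (fc c)^[j] c|) := by
  refine ⟨32768, by norm_num, ?_⟩
  intro n hn c hK k
  have hc2 := c_ge c n hK
  obtain ⟨hc, hpos, hk⟩ := id hK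
  have p1 := hpos 1 (by omega) (by omega)
  have p2 := hpos 2 (by omega) (by omega)
  have p3 := hpos 3 (by omega) (by omega)
  have p4 := hpos 4 (by omega) (by omega)
  have e1 : (fc c)^[1] c = c ^ 2 + c := fc_it c c 0
  have e2 : (fc c)^[2] c = ((fc c)^[1] c) ^ 2 + c := fc_it c c 1
  have e3 : (fc c)^[3] c = ((fc c)^[2] c) ^ 2 + c := fc_it c c 2
  have e4 : (fc c)^[4] c = ((fc c)^[3] c) ^ 2 + c := fc_it c c 3
  set s := Real.sqrt (-c) with hs
  have hss : s ^ 2 = -c := Real.sq_sqrt (by linarith)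
  have hs0 : 0 ≤ s := Real.sqrt_nonneg _
  set v := Real.sqrt (s ^ 2 + s) with hvdef
  have hvv : v ^ 2 = s ^ 2 + s := Real.sq_sqrt (by positivity)
  have hv0 : 0 ≤ v := Real.sqrt_nonneg _
  have hc1 : 1 < -c := by rw [e1] at p1; nlinarith
  have hs1 : 1 ≤ s := sqle _ _ hs0 (by linarith)
  have hs15 : s ≤ 3 / 2 := sqle _ _ (by norm_num) (by linarith)
  have hv2 : v ≤ 2 := sqle _ _ (by norm_num) (by linarith)
  have hsv : s ≤ v := sqle _ _ hv0 (by linarith)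
  have x3 : s ≤ (fc c)^[3] c := sqle _ _ p3.le (by linarith)
  have x1 : s ≤ (fc c)^[1] c := sqle _ _ p1.le (by linarith)
  have x2 : v ≤ (fc c)^[2] c := sqle _ _ p2.le (by linarith)
  have xc : v ≤ -c := sqle _ _ (by linarith) (by linarith [neg_sq c])
  obtain ⟨ψ, hψ⟩ := branch_all c v n hn hK hv0 xc (by rw [← e1, ← e2]; exact x2)
    (by linarith) (by linarith) k
  have q := hk k
  have r1 : (fc c)^[n + 3 * k + 1] c = ((fc c)^[n + 3 * k] c) ^ 2 + c := fc_it _ _ _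
  have r2 : (fc c)^[n + 3 * k + 2] c = ((fc c)^[n + 3 * k + 1] c) ^ 2 + c := fc_it _ _ _
  have hm0 : 0 < n + 3 * k := by omega
  generalize n + 3 * k = m at *
  have hy1 : (fc c)^[m + 1] c ≤ -s := by
    have := sqle s (-(fc c)^[m + 1] c) (by linarith [q.1]) (by linarith [q.2, neg_sq ((fc c)^[m + 1] c)])
    linarith
  have hy : ((fc c)^[m] c) ^ 2 ≤ s ^ 2 - s := by linarith
  have hyabs : |(fc c)^[m] c| < s := abs_lt_of_sq_lt_sq (by linarith) hs0
  obtain ⟨hyl, hyu⟩ := abs_lt.mp hyabs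
  have hyD : (fc c)^[m] c ∈ Set.Icc (-v) v := ⟨by linarith, by linarith⟩
  have hsg : ∀ t ∈ Set.Icc (-v) v, ψ t ≤ 0 := by
    intro t ht
    have := hψ.sgn t ht _ hyD 0 hm0
    rw [hψ.base] at this
    simp only [Function.iterate_zero, id] at this
    exact nonpos_of_mul_nonneg_left this hc
  have f3 : ∀ t, (fc c)^[3] t = ((t ^ 2 + c) ^ 2 + c) ^ 2 + c := fun t => rfl
  have hcont : ContinuousOn (fun t => (fc c)^[3] t - ψ t) (Set.Icc (-v) v) := by
    simp only [f3]
    exact ContinuousOn.sub (by fun_prop) hψ.cont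
  have fs : ∀ t, t ^ 2 = s ^ 2 → (fc c)^[3] t = c ^ 2 + c := by
    intro t ht; rw [f3, ht, hss]; ring
  have fv : ∀ t, t ^ 2 = v ^ 2 → (fc c)^[3] t = c := by
    intro t ht
    have : t ^ 2 + c = s := by linarith
    rw [f3, this, hss]; ring
  -- the common conclusion
  have main : ∀ t ∈ Set.Icc (-v) v, ∀ a ∈ Set.Icc (-v) v, |a| = v → s ≤ |t| → |t| ≤ v →
      c < ψ t → ψ a < c → (fc c)^[3] t - ψ t = 0 →
      ∃ x ∈ Set.Icc c (c ^ 2 + c), (fc c)^[m + 3] x = x ∧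
        ∏ j ∈ Finset.range (m + 3), |2 * (fc c)^[j] x| ≤
          32768 * Real.sqrt (∏ j ∈ Finset.range m, |2 * (fc c)^[j] c|) := by
    intro t ht a ha hav hst htv hct hac h0
    have hper : (fc c)^[m + 3] (ψ t) = ψ t := by
      rw [add_comm, Function.iterate_add_apply, hψ.inv t ht]; linarith
    refine ⟨ψ t, ⟨hct.le, by linarith [hsg t ht]⟩, hper, ?_⟩
    refine estimate c (ψ a) (ψ t) s v m hs1 (by linarith) (by linarith) hv0 hvv hv2 ?_ ?_ ?_
      hac hct hy ?_ ?_ ?_ hper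
    · have := hψ.sgn a ha _ hyD
      rwa [hψ.base] at this
    · have := hψ.sgn _ hyD t ht
      rwa [hψ.base] at this
    · exact hψ.sgn a ha t ht
    · rw [hψ.inv a ha, hav]
    · rw [hψ.inv t ht]; exact hst
    · rw [hψ.inv t ht]; exact htv
  have mv : v ∈ Set.Icc (-v) v := ⟨by linarith, le_rfl⟩
  have mnv : -v ∈ Set.Icc (-v) v := ⟨le_rfl, by linarith⟩
  have ms : s ∈ Set.Icc (-v) v := ⟨by linarith, hsv⟩
  have mns : -s ∈ Set.Icc (-v) v := ⟨by linarith, by linarith⟩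
  rcases hψ.mono with hmo | hmo
  · have hsub : Set.Icc s v ⊆ Set.Icc (-v) v := Set.Icc_subset_Icc (by linarith) le_rfl
    have k1 := hmo hyD mv (by linarith)
    rw [hψ.base] at k1
    obtain ⟨t, ht, h0⟩ := intermediate_value_Icc' hsv (hcont.mono hsub)
      (show (0 : ℝ) ∈ Set.Icc _ _ from
        ⟨by rw [fv v rfl]; linarith, by rw [fs s rfl]; linarith [hsg s ms]⟩)
    have htabs : |t| = t := abs_of_nonneg (by linarith [ht.1])
    refine main t (hsub ht) (-v) mnv (by rw [abs_neg, abs_of_nonneg hv0]) (by rw [htabs]; exact ht.1)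
      (by rw [htabs]; exact ht.2) ?_ ?_ h0
    · have := hmo hyD (hsub ht) (by linarith [ht.1])
      rwa [hψ.base] at this
    · have := hmo mnv hyD (by linarith)
      rwa [hψ.base] at this
  · have hsub : Set.Icc (-v) (-s) ⊆ Set.Icc (-v) v := Set.Icc_subset_Icc le_rfl (by linarith)
    have k1 := hmo mnv hyD (by linarith)
    rw [hψ.base] at k1
    obtain ⟨t, ht, h0⟩ := intermediate_value_Icc (neg_le_neg hsv) (hcont.mono hsub)
      (show (0 : ℝ) ∈ Set.Icc _ _ from
        ⟨by rw [fv (-v) (neg_sq v)]; linarith, by rw [fs (-s) (neg_sq s)]; linarith [hsg (-s) mns]⟩)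
    have htabs : |t| = -t := abs_of_nonpos (by linarith [ht.2])
    refine main t (hsub ht) v mv (abs_of_nonneg hv0) (by rw [htabs]; linarith [ht.2])
      (by rw [htabs]; linarith [ht.1]) ?_ ?_ h0
    · have := hmo (hsub ht) hyD (by linarith [ht.2])
      rwa [hψ.base] at this
    · have := hmo hyD mv (by linarith)
      rwa [hψ.base] at this
end

section
/- Let p̃ : ℝ → ℝ be differentiable at c = −2, satisfy f_c³(p̃(c)) = p̃(c) for all c in some neighborhood of −2, and satisfy p̃(−2) = 2 cos(4π/9). Then the function c ↦ 8 p̃(c) (p̃(c)² + c) ((p̃(c)² + c)² + c), which gives the derivative of f_c³ at the periodic point p̃(c), is differentiable at −2 and its derivative at −2 equals 24. -/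
open Real Filter

theorem stmt_11 (ptilde : ℝ → ℝ)
    (hptilde : DifferentiableAt ℝ ptilde (-2))
    (hptildefix : ∀ᶠ c in nhds (-2 : ℝ), (fc c)^[3] (ptilde c) = ptilde c)
    (hptildeval : ptilde (-2) = 2 * Real.cos (4 * π / 9)) :
    DifferentiableAt ℝ
      (fun c => 8 * ptilde c * ((ptilde c) ^ 2 + c) * (((ptilde c) ^ 2 + c) ^ 2 + c)) (-2) ∧
    deriv (fun c => 8 * ptilde c * ((ptilde c) ^ 2 + c) * (((ptilde c) ^ 2 + c) ^ 2 + c)) (-2)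
      = 24 := by
  have hcub : ptilde (-2) ^ 3 = 3 * ptilde (-2) - 1 := by
    have h := Real.cos_three_mul (4 * π / 9)
    have h2 : Real.cos (3 * (4 * π / 9)) = -(1 / 2) := by
      rw [show 3 * (4 * π / 9) = π / 3 + π by ring, Real.cos_add_pi, Real.cos_pi_div_three]
    rw [h2] at h
    rw [hptildeval]
    linear_combination (-2) * h
  obtain ⟨d, hd⟩ : ∃ d, HasDerivAt ptilde d (-2) := ⟨_, hptilde.hasDerivAt⟩
  have hq : HasDerivAt (fun c => (ptilde c) ^ 2 + c) (2 * ptilde (-2) * d + 1) (-2) := by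
    have := (hd.fun_pow 2).fun_add (hasDerivAt_id' (-2 : ℝ))
    simpa using this
  have hr : HasDerivAt (fun c => ((ptilde c) ^ 2 + c) ^ 2 + c)
      (2 * (ptilde (-2) ^ 2 + -2) * (2 * ptilde (-2) * d + 1) + 1) (-2) := by
    have := (hq.fun_pow 2).fun_add (hasDerivAt_id' (-2 : ℝ))
    simpa using this
  have hs : HasDerivAt (fun c => (((ptilde c) ^ 2 + c) ^ 2 + c) ^ 2 + c)
      (2 * ((ptilde (-2) ^ 2 + -2) ^ 2 + -2) *
        (2 * (ptilde (-2) ^ 2 + -2) * (2 * ptilde (-2) * d + 1) + 1) + 1) (-2) := by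
    have := (hr.fun_pow 2).fun_add (hasDerivAt_id' (-2 : ℝ))
    simpa using this
  have he := hs.unique (hd.congr_of_eventuallyEq (by
    filter_upwards [hptildefix] with c hc
    simpa [fc] using hc))
  have hm := ((hd.const_mul 8).fun_mul hq).fun_mul hr
  refine ⟨hm.differentiableAt, hm.deriv.trans ?_⟩
  generalize ptilde (-2) = p at *
  have hrr : (p ^ 2 + -2) ^ 2 + -2 = 2 - p - p ^ 2 := by
    linear_combination p * hcub
  rw [hrr] at he ⊢
  have hd9 : d = (2 * p ^ 2 - 2 * p - 7) / 9 := by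
    grind
  subst hd9
  grind
end
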